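/- arXiv:1602.05738 — 2 statements merged into one kernel-verified Lean document; each statement's English description precedes it below -/
import Mathlib

section
/- Let T be a finite-dimensional torus (ℝ/ℤ)^d and let α be an action of ℤ² on T by continuous group automorphisms that is unipotent, i.e., for each g ∈ ℤ² there exists k ≥ 1 with (α(g) − I)^k = 0. Let ν be an ergodic α-invariant Borel probability measure on T. Then there exists a finite index subgroup Λ ⊆ ℤ² such that each Λ-ergodic component of ν is the normalized Haar measure on a translate of a subtorus (a coset x + S where S ⊆ T is a closed connected subgroup). -/
open MeasureTheory

/-- `Xs` is the family of `Λ`-ergodic components of `(X, μ)` for the `ℤ²`-action `T` :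
the `Xs i` are measurable `Λ`-invariant sets of positive measure, pairwise disjoint
and covering `X` up to null sets, and on each of them every `Λ`-invariant set is
trivial (i.e. the `Xs i` are the atoms of the σ-algebra of `Λ`-invariant sets). -/
def IsErgodicComponents {X : Type*} [MeasurableSpace X] (μ : Measure X)
    (T : ℤ × ℤ → X → X) (Λ : AddSubgroup (ℤ × ℤ)) {n : ℕ} (Xs : Fin n → Set X) : Prop :=
  (∀ i, MeasurableSet (Xs i)) ∧
  (∀ i, 0 < μ (Xs i)) ∧
  (∀ i j, i ≠ j → μ (Xs i ∩ Xs j) = 0) ∧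
  μ (Set.univ \ ⋃ i, Xs i) = 0 ∧
  (∀ i, ∀ g ∈ Λ, T g ⁻¹' Xs i =ᵐ[μ] Xs i) ∧
  (∀ i, ∀ S : Set X, MeasurableSet S → (∀ g ∈ Λ, T g ⁻¹' S =ᵐ[μ] S) →
    μ (Xs i ∩ S) = 0 ∨ μ (Xs i \ S) = 0)


abbrev UTor (d : ℕ) := Fin d → AddCircle (1 : ℝ)
abbrev UCh (d : ℕ) := UTor d →ₜ+ AddCircle (1 : ℝ)

/-- the exponential of a character, as a continuous function -/
noncomputable def uE {d : ℕ} (χ : UCh d) : C(UTor d, ℂ) :=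
  ⟨fun x => (AddCircle.toCircle (χ x) : ℂ), by
    exact continuous_induced_dom.comp (AddCircle.continuous_toCircle.comp χ.continuous_toFun)⟩

lemma uE_apply {d : ℕ} (χ : UCh d) (x : UTor d) :
    uE χ x = (AddCircle.toCircle (χ x) : ℂ) := rfl

lemma uE_norm {d : ℕ} (χ : UCh d) (x : UTor d) : ‖uE χ x‖ = 1 := by
  rw [uE_apply]; exact Circle.norm_coe _

lemma uE_add {d : ℕ} (χ ψ : UCh d) (x : UTor d) : uE (χ + ψ) x = uE χ x * uE ψ x := by
  simp [uE_apply, AddCircle.toCircle_add]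

lemma uE_neg {d : ℕ} (χ : UCh d) (x : UTor d) : uE (-χ) x = star (uE χ x) := by
  have h : (-χ) x = -(χ x) := rfl
  rw [uE_apply, uE_apply, h, AddCircle.toCircle_neg]
  exact Circle.coe_inv_eq_conj _

lemma uE_sub {d : ℕ} (χ ψ : UCh d) (x : UTor d) :
    uE (χ - ψ) x = uE χ x * star (uE ψ x) := by
  rw [sub_eq_add_neg, uE_add, uE_neg]

lemma uE_map_add {d : ℕ} (χ : UCh d) (x y : UTor d) : uE χ (x + y) = uE χ x * uE χ y := by
  simp [uE_apply, AddCircle.toCircle_add]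

lemma toCircle_eq_one {t : AddCircle (1 : ℝ)} (h : (AddCircle.toCircle t : ℂ) = 1) : t = 0 := by
  have : AddCircle.toCircle t = AddCircle.toCircle (0 : AddCircle (1 : ℝ)) := by
    rw [AddCircle.toCircle_zero]; exact Subtype.ext h
  exact AddCircle.injective_toCircle one_ne_zero this

def uProj (d : ℕ) (i : Fin d) : UCh d :=
  { toFun := fun x => x i, map_zero' := rfl, map_add' := fun _ _ => rfl,
    continuous_toFun := continuous_apply i }

lemma uProj_apply (d : ℕ) (i : Fin d) (x : UTor d) : uProj d i x = x i := rfl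

noncomputable def uChar {d : ℕ} (m : Fin d → ℤ) : UCh d := ∑ i, m i • uProj d i

def uEval {d : ℕ} (x : UTor d) : UCh d →+ AddCircle (1 : ℝ) :=
  { toFun := fun χ => χ x, map_zero' := rfl, map_add' := fun _ _ => rfl }

lemma uChar_apply {d : ℕ} (m : Fin d → ℤ) (x : UTor d) : uChar m x = ∑ i, m i • x i := by
  change uEval x (uChar m) = _
  rw [uChar, map_sum]
  exact Finset.sum_congr rfl fun i _ => by rw [map_zsmul]; rfl

lemma uE_uChar {d : ℕ} (m : Fin d → ℤ) : uE (uChar m) = UnitAddTorus.mFourier m := by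
  ext x
  rw [uE_apply, uChar_apply]
  simp only [UnitAddTorus.mFourier, ContinuousMap.coe_mk, fourier_apply]
  have : ∀ s : Finset (Fin d), (AddCircle.toCircle (∑ i ∈ s, m i • x i) : ℂ)
      = ∏ i ∈ s, (AddCircle.toCircle (m i • x i) : ℂ) := by
    intro s
    induction s using Finset.cons_induction with
    | empty => simp
    | cons a s ha ih =>
      rw [Finset.sum_cons, Finset.prod_cons, AddCircle.toCircle_add, Circle.coe_mul, ih]
  exact this _

noncomputable def uL {d : ℕ} (μ : Measure (UTor d)) [IsFiniteMeasure μ] (w : C(UTor d, ℂ)) :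
    C(UTor d, ℂ) →L[ℂ] ℂ :=
  LinearMap.mkContinuous
    { toFun := fun f => ∫ x, f x * w x ∂μ
      map_add' := fun f g => by
        simp only [ContinuousMap.add_apply, add_mul]
        exact integral_add ((f * w).continuous.integrable_of_hasCompactSupport
            (HasCompactSupport.of_compactSpace _))
          ((g * w).continuous.integrable_of_hasCompactSupport
            (HasCompactSupport.of_compactSpace _))
      map_smul' := fun c f => by
        simp only [ContinuousMap.smul_apply, smul_eq_mul, mul_assoc, RingHom.id_apply]
        exact integral_const_mul _ _ }
    (‖w‖ * μ.real Set.univ) (fun f => by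
      have := norm_integral_le_of_norm_le_const (μ := μ) (f := fun x => f x * w x)
        (C := ‖f‖ * ‖w‖) (Filter.Eventually.of_forall fun x => by
          rw [norm_mul]
          exact mul_le_mul (f.norm_coe_le_norm x) (w.norm_coe_le_norm x) (norm_nonneg _)
            (norm_nonneg _))
      refine this.trans (le_of_eq ?_)
      ring)

lemma uL_apply {d : ℕ} (μ : Measure (UTor d)) [IsFiniteMeasure μ] (w f : C(UTor d, ℂ)) :
    uL μ w f = ∫ x, f x * w x ∂μ := rfl

lemma uL_ext {d : ℕ} (L M : C(UTor d, ℂ) →L[ℂ] ℂ)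
    (h : ∀ m : Fin d → ℤ, L (uE (uChar m)) = M (uE (uChar m))) : L = M := by
  refine ContinuousLinearMap.ext_on (s := Set.range (UnitAddTorus.mFourier (d := Fin d))) ?_ ?_
  · have := UnitAddTorus.span_mFourier_closure_eq_top (d := Fin d)
    exact Submodule.dense_iff_topologicalClosure_eq_top.2 this
  · rintro _ ⟨m, rfl⟩
    have := h m
    rwa [uE_uChar] at this

/-- Fourier uniqueness -/
lemma u_measure_ext {d : ℕ} {μ₁ μ₂ : Measure (UTor d)} [IsFiniteMeasure μ₁] [IsFiniteMeasure μ₂]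
    (h : ∀ χ : UCh d, ∫ x, uE χ x ∂μ₁ = ∫ x, uE χ x ∂μ₂) : μ₁ = μ₂ := by
  have key : uL μ₁ 1 = uL μ₂ 1 := uL_ext _ _ fun m => by
    simpa [uL_apply] using h (uChar m)
  apply ext_of_forall_integral_eq_of_IsFiniteMeasure
  intro f
  have h2 := congrArg (fun L => L (⟨fun x => (f x : ℂ), by fun_prop⟩ : C(UTor d, ℂ))) key
  simp only [uL_apply, ContinuousMap.coe_mk, ContinuousMap.one_apply, mul_one] at h2
  rw [integral_complex_ofReal, integral_complex_ofReal] at h2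
  exact_mod_cast h2

/-- classification of characters -/
lemma uChar_surj {d : ℕ} (χ : UCh d) : ∃ m : Fin d → ℤ, χ = uChar m := by
  by_contra! hcon
  let μ : Measure (UTor d) := Measure.addHaar
  have hz : ∀ ψ : UCh d, ψ ≠ 0 → ∫ x, uE ψ x ∂μ = 0 := by
    intro ψ hψ
    obtain ⟨y, hy⟩ : ∃ y, ψ y ≠ 0 := by
      by_contra! h
      exact hψ (ContinuousAddMonoidHom.ext h)
    have h1 : ∫ x, uE ψ (y + x) ∂μ = ∫ x, uE ψ x ∂μ := integral_add_left_eq_self _ y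
    simp only [uE_map_add] at h1
    rw [integral_const_mul] at h1
    by_contra hne
    have : uE ψ y = 1 := by
      apply mul_right_cancel₀ hne
      rw [h1, one_mul]
    exact hy (toCircle_eq_one this)
  have key : uL μ (star (uE χ)) = 0 := uL_ext _ _ fun m => by
    have := hz (uChar m - χ) (sub_ne_zero.2 (hcon m).symm)
    simp only [uE_sub] at this
    simpa [uL_apply] using this
  have h2 := congrArg (fun L => L (uE χ)) key
  have h3 : ∀ x, uE χ x * star (uE χ x) = 1 := fun x => by
    rw [← uE_sub, sub_self]; simp [uE_apply]
  simp only [uL_apply, ContinuousMap.star_apply, h3] at h2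
  simp at h2
  exact absurd h2 (by
    rw [Measure.real, ENNReal.toReal_eq_zero_iff]; simp [μ, NeZero.ne])

instance {d : ℕ} : Module.Finite ℤ (UCh d) := by
  let f : (Fin d → ℤ) →ₗ[ℤ] UCh d := Fintype.linearCombination ℤ (uProj d)
  refine Module.Finite.of_surjective f fun χ => ?_
  obtain ⟨m, rfl⟩ := uChar_surj χ
  exact ⟨m, by simp [f, Fintype.linearCombination_apply, uChar]⟩

structure USys (d : ℕ) where
  a : ℤ × ℤ → (UTor d →ₜ+ UTor d)
  a_zero : ∀ x, a 0 x = x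
  a_add : ∀ g h x, a (g + h) x = a g (a h x)
  ν : Measure (UTor d)
  prob : IsProbabilityMeasure ν
  inv : ∀ g, MeasurePreserving (a g) ν ν
  erg : ∀ S : Set (UTor d), MeasurableSet S →
      (∀ g : ℤ × ℤ, (a g) ⁻¹' S =ᵐ[ν] S) → ν S = 0 ∨ ν S = 1
  uni : ∀ g, ∃ k, ∀ x, ((fun y => a g y - y)^[k]) x = 0

attribute [instance] USys.prob

namespace USys
variable {d : ℕ} (s : USys d)

def A (g : ℤ × ℤ) : UCh d →ₗ[ℤ] UCh d :=
  AddMonoidHom.toIntLinearMap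
    { toFun := fun χ => χ.comp (s.a g), map_zero' := rfl, map_add' := fun _ _ => rfl }

lemma A_apply (g : ℤ × ℤ) (χ : UCh d) (x : UTor d) : s.A g χ x = χ (s.a g x) := rfl

lemma A_zero : s.A 0 = 1 := by
  ext χ x
  rw [A_apply, s.a_zero]; rfl

lemma A_add (g h : ℤ × ℤ) : s.A (g + h) = s.A g * s.A h := by
  ext χ x
  rw [A_apply, add_comm, s.a_add]; rfl

lemma A_nsmul (n : ℕ) (g : ℤ × ℤ) : s.A (n • g) = s.A g ^ n := by
  induction n with
  | zero => rw [zero_smul, A_zero, pow_zero]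
  | succ n ih => rw [succ_nsmul, A_add, ih, pow_succ]

lemma A_comm (g h : ℤ × ℤ) : Commute (s.A g) (s.A h) := by
  change _ * _ = _ * _
  rw [← A_add, ← A_add, add_comm]

lemma uni' (g : ℤ × ℤ) : ∃ k, (s.A g - 1) ^ k = 0 := by
  obtain ⟨k, hk⟩ := s.uni g
  refine ⟨k, ?_⟩
  have : ∀ (k : ℕ) (χ : UCh d) (x : UTor d),
      ((s.A g - 1) ^ k) χ x = χ (((fun y => s.a g y - y)^[k]) x) := by
    intro k
    induction k with
    | zero => intro χ x; rfl
    | succ k ih =>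
      intro χ x
      rw [pow_succ, Function.iterate_succ_apply', Module.End.mul_apply, ih, map_sub]
      rfl
  ext χ x
  rw [this, hk, map_zero]
  rfl

lemma uE_A (g : ℤ × ℤ) (χ : UCh d) (x : UTor d) : uE (s.A g χ) x = uE χ (s.a g x) := rfl

/-- characters taking finitely many values almost surely -/
def D : Submodule ℤ (UCh d) where
  carrier := {χ | ∃ F : Set (AddCircle (1 : ℝ)), F.Finite ∧ ∀ᵐ x ∂s.ν, χ x ∈ F}
  zero_mem' := ⟨{0}, Set.finite_singleton _, Filter.Eventually.of_forall fun _ => rfl⟩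
  add_mem' := by
    rintro χ ψ ⟨F, hF, h⟩ ⟨F', hF', h'⟩
    refine ⟨Set.image2 (· + ·) F F', hF.image2 _ hF', ?_⟩
    filter_upwards [h, h'] with x hx hx'
    exact ⟨_, hx, _, hx', rfl⟩
  smul_mem' := by
    rintro n χ ⟨F, hF, h⟩
    refine ⟨(fun y => n • y) '' F, hF.image _, ?_⟩
    filter_upwards [h] with x hx
    refine ⟨_, hx, ?_⟩
    exact (map_zsmul (uEval x) n χ).symm

lemma mem_D {χ : UCh d} : χ ∈ s.D ↔
    ∃ F : Set (AddCircle (1 : ℝ)), F.Finite ∧ ∀ᵐ x ∂s.ν, χ x ∈ F := Iff.rfl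

lemma D_sat (n : ℕ) (hn : 0 < n) (χ : UCh d) (h : n • χ ∈ s.D) : χ ∈ s.D := by
  obtain ⟨F, hF, h⟩ := h
  refine ⟨⋃ y ∈ F, {z | n • z = y}, hF.biUnion fun y _ => ?_, ?_⟩
  · rcases Set.eq_empty_or_nonempty {z : AddCircle (1 : ℝ) | n • z = y} with h0 | ⟨z₀, hz₀⟩
    · rw [h0]; exact Set.finite_empty
    · refine ((AddCircle.finite_torsion (1 : ℝ) hn).image (fun u => z₀ + u)).subset ?_
      intro z hz
      refine ⟨z - z₀, ?_, by simp⟩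
      have h1 : n • z = y := hz
      have h2 : n • z₀ = y := hz₀
      change n • (z - z₀) = 0
      rw [smul_sub, h1, h2, sub_self]
  · filter_upwards [h] with x hx
    have : (n • χ) x = n • χ x := map_nsmul (uEval x) n χ
    simp only [Set.mem_iUnion]
    exact ⟨_, hx, this.symm⟩

lemma D_inv (g : ℤ × ℤ) {χ : UCh d} (h : χ ∈ s.D) : s.A g χ ∈ s.D := by
  obtain ⟨F, hF, h⟩ := h
  exact ⟨F, hF, (s.inv g).quasiMeasurePreserving.ae h⟩

lemma D_tf (n : ℤ) (hn : n ≠ 0) (χ : UCh d) (h : n • χ ∈ s.D) : χ ∈ s.D := by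
  rcases Int.natAbs_eq n with hn' | hn'
  · refine s.D_sat n.natAbs (by omega) χ ?_
    rw [hn', natCast_zsmul] at h; exact h
  · refine s.D_sat n.natAbs (by omega) χ ?_
    rw [hn', neg_smul, natCast_zsmul, neg_mem_iff] at h; exact h

instance : Module.IsTorsionFree ℤ (UCh d ⧸ s.D) := by
  refine Module.IsTorsionFree.of_smul_eq_zero ?_
  intro n m h
  induction m using Submodule.Quotient.induction_on with
  | H χ =>
    by_cases hn : n = 0
    · exact Or.inl hn
    · right
      rw [← Submodule.Quotient.mk_smul, Submodule.Quotient.mk_eq_zero] at h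
      rw [Submodule.Quotient.mk_eq_zero]
      exact s.D_tf n hn χ h

/-- the subtorus -/
def S : AddSubgroup (UTor d) where
  carrier := {x | ∀ χ ∈ s.D, χ x = 0}
  zero_mem' := fun χ _ => map_zero χ
  add_mem' := fun {x y} hx hy χ h => by rw [map_add, hx χ h, hy χ h, add_zero]
  neg_mem' := fun {x} hx χ h => by rw [map_neg, hx χ h, neg_zero]

lemma mem_S {x : UTor d} : x ∈ s.S ↔ ∀ χ ∈ s.D, χ x = 0 := Iff.rfl

lemma S_closed : IsClosed (s.S : Set (UTor d)) := by
  have : (s.S : Set (UTor d)) = ⋂ χ ∈ s.D, {x | χ x = 0} := by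
    ext x; simp [mem_S]
  rw [this]
  exact isClosed_biInter fun χ _ => isClosed_eq χ.continuous_toFun continuous_const

lemma exists_proj : ∃ p : UCh d →ₗ[ℤ] UCh d, (∀ χ ∈ s.D, p χ = 0) ∧ ∀ χ, χ - p χ ∈ s.D := by
  obtain ⟨σ, hσ⟩ := Module.projective_lifting_property s.D.mkQ LinearMap.id
    (Submodule.mkQ_surjective _)
  refine ⟨σ ∘ₗ s.D.mkQ, fun χ h => ?_, fun χ => ?_⟩
  · rw [LinearMap.comp_apply, (Submodule.Quotient.mk_eq_zero _).2 h |> fun h => (h : s.D.mkQ χ = 0),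
      map_zero]
  · rw [← Submodule.Quotient.mk_eq_zero, Submodule.Quotient.mk_sub, sub_eq_zero]
    exact (LinearMap.congr_fun hσ (s.D.mkQ χ)).symm

lemma S_conn : IsConnected (s.S : Set (UTor d)) := by
  obtain ⟨p, hp0, hp⟩ := s.exists_proj
  let P : UTor d → UTor d := fun x i => p (uProj d i) x
  have hP : Continuous P := continuous_pi fun i => (p (uProj d i)).continuous_toFun
  have hχ : ∀ (χ : UCh d) x, χ (P x) = p χ x := by
    intro χ x
    obtain ⟨m, rfl⟩ := uChar_surj χ
    rw [uChar_apply, uChar, map_sum]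
    change _ = uEval x _
    rw [map_sum]
    refine Finset.sum_congr rfl fun i _ => ?_
    rw [map_zsmul, map_zsmul]
    rfl
  have : (s.S : Set (UTor d)) = Set.range P := by
    ext x
    constructor
    · intro hx
      refine ⟨x, ?_⟩
      ext i
      have h1 := hχ (uProj d i) x
      rw [uProj_apply] at h1
      have h2 : uProj d i x - p (uProj d i) x = 0 := hx _ (hp (uProj d i))
      rw [h1, ← sub_eq_zero.1 h2, uProj_apply]
    · rintro ⟨y, rfl⟩ χ h
      rw [hχ, hp0 χ h]; rfl
  rw [this]
  exact isConnected_range hP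

end USys

lemma nilp_aux {M : Type*} [AddCommGroup M] [Module.IsTorsionFree ℤ M] (L K : Module.End ℤ M)
    (hK : Commute L K) (n : ℕ) (hn : 0 < n) (k : ℕ) : ∀ w : M, (L ^ k) w = 0 →
    n • w + L (K w) = 0 → w = 0 := by
  induction k with
  | zero => intro w h _; simpa using h
  | succ k ih =>
    intro w h1 h2
    have h3 : L w = 0 := by
      apply ih
      · rw [← h1, pow_succ]; rfl
      · have := congrArg L h2
        rw [map_add, map_nsmul, map_zero] at this
        have e : K (L w) = L (K w) := (LinearMap.congr_fun hK w).symm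
        rw [e]; exact this
    have e : L (K w) = K (L w) := LinearMap.congr_fun hK w
    rw [e, h3, map_zero, add_zero] at h2
    have : (n : ℤ) • w = 0 := by simpa using h2
    exact (smul_eq_zero.1 this).resolve_left (by exact_mod_cast hn.ne')

lemma nilp_main {M : Type*} [AddCommGroup M] [Module.IsTorsionFree ℤ M] (B : Module.End ℤ M)
    (k : ℕ) (hB : (B - 1) ^ k = 0) (n : ℕ) (hn : 0 < n) (v : M) (h : (B ^ n) v = v) :
    B v = v := by
  obtain ⟨z, hz⟩ := Polynomial.powAddExpansion (1 : Polynomial ℤ) Polynomial.X n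
  have h1 := congrArg (Polynomial.aeval (B - 1)) hz
  simp only [map_pow, map_add, map_mul, map_one, Polynomial.aeval_X, one_pow, mul_one,
    map_natCast] at h1
  rw [add_sub_cancel] at h1
  set K := Polynomial.aeval (B - 1) z with hKdef
  have hK : Commute (B - 1) K := by
    have := (Commute.all (Polynomial.X : Polynomial ℤ) z).map (Polynomial.aeval (B - 1))
    simpa using this
  have h2 := LinearMap.congr_fun h1 v
  rw [h] at h2
  simp only [LinearMap.add_apply, Module.End.one_apply, Module.End.mul_apply, pow_two,
    Module.End.natCast_apply] at h2
  have h3 : (B - 1) v = 0 := by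
    apply nilp_aux (B - 1) K hK n hn k
    · rw [hB]; rfl
    · have e : (B - 1) (K ((B - 1) v)) = K ((B - 1) ((B - 1) v)) :=
        LinearMap.congr_fun hK ((B - 1) v)
      rw [e]
      have := h2
      rw [add_assoc] at this
      exact (left_eq_add.1 this)
  exact sub_eq_zero.1 h3

namespace USys
variable {d : ℕ} (s : USys d)

lemma no_tors (g : ℤ × ℤ) (n : ℕ) (hn : 0 < n) (χ : UCh d)
    (h : (s.A g ^ n) χ - χ ∈ s.D) : s.A g χ - χ ∈ s.D := by
  obtain ⟨k, hk⟩ := s.uni' g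
  have hD : s.D ≤ s.D.comap (s.A g) := fun χ h => s.D_inv g h
  let B : Module.End ℤ (UCh d ⧸ s.D) := s.D.mapQ s.D (s.A g) hD
  have hpow : ∀ (n : ℕ) (χ : UCh d), (B ^ n) (s.D.mkQ χ) = s.D.mkQ ((s.A g ^ n) χ) := by
    intro n
    induction n with
    | zero => intro χ; rfl
    | succ n ih => intro χ; rw [pow_succ, pow_succ]; exact ih _
  have hpow' : ∀ (n : ℕ) (χ : UCh d),
      ((B - 1) ^ n) (s.D.mkQ χ) = s.D.mkQ (((s.A g - 1) ^ n) χ) := by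
    intro n
    induction n with
    | zero => intro χ; rfl
    | succ n ih => intro χ; rw [pow_succ, pow_succ]; exact ih _
  have hB : (B - 1) ^ k = 0 := by
    refine LinearMap.ext fun v => ?_
    obtain ⟨χ, rfl⟩ := s.D.mkQ_surjective v
    rw [hpow', hk]; simp
  have := nilp_main B k hB n hn (s.D.mkQ χ) (by
    rw [hpow, ← sub_eq_zero, ← map_sub]
    exact (Submodule.Quotient.mk_eq_zero _).2 h)
  rw [← Submodule.Quotient.mk_eq_zero, Submodule.Quotient.mk_sub, sub_eq_zero]
  exact this

end USys

namespace USys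
variable {d : ℕ} (s : USys d)

def cos (b : UTor d) : Set (UTor d) := {x | ∀ χ ∈ s.D, χ x = χ b}

def Cos : Set (Set (UTor d)) := {X | (∃ b, X = s.cos b) ∧ 0 < s.ν X}

lemma cos_eq (b : UTor d) : s.cos b = (fun y => b + y) '' (s.S : Set (UTor d)) := by
  ext x
  constructor
  · intro h
    refine ⟨x - b, fun χ hχ => ?_, by simp⟩
    rw [map_sub, h χ hχ, sub_self]
  · rintro ⟨y, hy, rfl⟩ χ hχ
    change χ (b + y) = χ b
    rw [map_add, hy χ hχ, add_zero]

lemma cos_eq_of_mem {b x : UTor d} (h : x ∈ s.cos b) : s.cos b = s.cos x := by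
  ext y
  exact ⟨fun hy χ hχ => (hy χ hχ).trans (h χ hχ).symm, fun hy χ hχ => (hy χ hχ).trans (h χ hχ)⟩

lemma cos_closed (b : UTor d) : IsClosed (s.cos b) := by
  have : s.cos b = ⋂ χ ∈ s.D, {x | χ x = χ b} := by
    ext x; simp [cos]
  rw [this]
  exact isClosed_biInter fun χ _ => isClosed_eq χ.continuous_toFun continuous_const

lemma Cos_meas {X : Set (UTor d)} (h : X ∈ s.Cos) : MeasurableSet X := by
  obtain ⟨⟨b, rfl⟩, -⟩ := h
  exact (s.cos_closed b).measurableSet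

lemma Cos_const {X : Set (UTor d)} (h : X ∈ s.Cos) {χ : UCh d} (hχ : χ ∈ s.D) {x y : UTor d}
    (hx : x ∈ X) (hy : y ∈ X) : χ x = χ y := by
  obtain ⟨⟨b, rfl⟩, -⟩ := h
  exact (hx χ hχ).trans (hy χ hχ).symm

lemma Cos_disj {X Y : Set (UTor d)} (h : X ∈ s.Cos) (h' : Y ∈ s.Cos) {x : UTor d}
    (hx : x ∈ X) (hy : x ∈ Y) : X = Y := by
  obtain ⟨⟨b, rfl⟩, -⟩ := h
  obtain ⟨⟨c, rfl⟩, -⟩ := h'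
  rw [s.cos_eq_of_mem hx, s.cos_eq_of_mem hy]

lemma Cos_preim {X : Set (UTor d)} (h : X ∈ s.Cos) (g : ℤ × ℤ) : (s.a g) ⁻¹' X ∈ s.Cos := by
  have hm := s.Cos_meas h
  refine ⟨?_, ?_⟩
  · obtain ⟨⟨b, rfl⟩, -⟩ := h
    refine ⟨s.a (-g) b, ?_⟩
    have hb : s.a g (s.a (-g) b) = b := by
      rw [← s.a_add, add_neg_cancel, s.a_zero]
    ext x
    constructor
    · intro hx χ hχ
      have := hx (s.A (-g) χ) (s.D_inv _ hχ)
      rw [A_apply, A_apply, ← s.a_add, neg_add_cancel, s.a_zero] at this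
      exact this
    · intro hx χ hχ
      have := hx (s.A g χ) (s.D_inv _ hχ)
      rw [A_apply, A_apply, hb] at this
      exact this
  · rw [(s.inv g).measure_preimage hm.nullMeasurableSet]
    exact h.2

lemma Cos_fin_conull : s.Cos.Finite ∧ ∀ᵐ x ∂s.ν, ∃ X ∈ s.Cos, x ∈ X := by
  obtain ⟨G, hG⟩ : s.D.FG := IsNoetherian.noetherian s.D
  have hGD : ∀ χ ∈ G, χ ∈ s.D := fun χ h => hG ▸ Submodule.subset_span h
  have hF : ∀ χ : G, ∃ F : Set (AddCircle (1 : ℝ)), F.Finite ∧ ∀ᵐ x ∂s.ν, χ.1 x ∈ F :=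
    fun χ => hGD χ.1 χ.2
  choose F hFf hF using hF
  let π : UTor d → (G → AddCircle (1 : ℝ)) := fun x χ => χ.1 x
  have hcos : ∀ b, s.cos b = π ⁻¹' {π b} := by
    intro b
    ext x
    constructor
    · intro h
      funext χ
      exact h χ.1 (hGD _ χ.2)
    · intro h χ hχ
      have h' : ∀ χ ∈ G, χ x = χ b := fun χ hχ => congrFun h ⟨χ, hχ⟩
      rw [← hG] at hχ
      induction hχ using Submodule.span_induction with
      | mem χ h => exact h' χ h
      | zero => rfl
      | add χ ψ _ _ h1 h2 =>
        change χ x + ψ x = χ b + ψ b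
        rw [h1, h2]
      | smul n χ _ h1 =>
        change uEval x (n • χ) = uEval b (n • χ)
        rw [map_zsmul, map_zsmul]
        exact congrArg (n • ·) h1
  have hPF : (Set.univ.pi F).Finite := Set.Finite.pi fun i => hFf i
  have hae : ∀ᵐ x ∂s.ν, π x ∈ Set.univ.pi F := by
    filter_upwards [ae_all_iff.2 hF] with x hx χ _
    exact hx χ
  constructor
  · refine (hPF.image (fun c => π ⁻¹' {c})).subset ?_
    rintro X ⟨⟨b, rfl⟩, hpos⟩
    refine ⟨π b, ?_, (hcos b).symm⟩
    by_contra hb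
    refine hpos.ne' ?_
    refine measure_mono_null ?_ hae
    intro x hx hx'
    rw [hcos] at hx
    apply hb
    have : π x = π b := hx
    rw [← this]; exact hx'
  · have h0 : ∀ᵐ x ∂s.ν, ∀ c ∈ Set.univ.pi F, s.ν (π ⁻¹' {c}) = 0 → x ∉ π ⁻¹' {c} := by
      rw [ae_ball_iff hPF.countable]
      intro c _
      by_cases hc : s.ν (π ⁻¹' {c}) = 0
      · have : ∀ᵐ x ∂s.ν, x ∉ π ⁻¹' {c} := measure_eq_zero_iff_ae_notMem.1 hc
        filter_upwards [this] with x hx _ using hx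
      · exact Filter.Eventually.of_forall fun x h => absurd h hc
    filter_upwards [hae, h0] with x hx hx0
    refine ⟨s.cos x, ⟨⟨x, rfl⟩, ?_⟩, fun _ _ => rfl⟩
    rw [pos_iff_ne_zero]
    intro h
    rw [hcos] at h
    exact hx0 _ hx h rfl

lemma a_surj (g : ℤ × ℤ) : Function.Surjective (s.a g) := fun x =>
  ⟨s.a (-g) x, by rw [← s.a_add, add_neg_cancel, s.a_zero]⟩

lemma exists_N : ∃ N : ℕ, 0 < N ∧ ∀ g : ℤ × ℤ, ∀ X ∈ s.Cos, (s.a (N • g)) ⁻¹' X = X := by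
  have hfin := s.Cos_fin_conull.1
  have : Finite s.Cos := hfin
  refine ⟨Nat.card (Equiv.Perm s.Cos), Nat.card_pos, ?_⟩
  intro g X hX
  let f : s.Cos → s.Cos := fun Y => ⟨(s.a g) ⁻¹' Y.1, s.Cos_preim Y.2 g⟩
  have hf : Function.Injective f := by
    intro Y Z h
    exact Subtype.ext ((s.a_surj g).preimage_injective (congrArg Subtype.val h))
  let σ : Equiv.Perm s.Cos := Equiv.ofBijective f (Finite.injective_iff_bijective.1 hf)
  have hpow : ∀ (n : ℕ) (Y : s.Cos), ((σ ^ n) Y).1 = (s.a (n • g)) ⁻¹' Y.1 := by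
    intro n
    induction n with
    | zero =>
      intro Y
      ext x
      simp [s.a_zero]
    | succ n ih =>
      intro Y
      rw [pow_succ, Equiv.Perm.mul_apply, ih]
      ext x
      change s.a g (s.a (n • g) x) ∈ Y.1 ↔ s.a ((n + 1) • g) x ∈ Y.1
      rw [← s.a_add, add_comm, succ_nsmul]
  have := hpow (Nat.card (Equiv.Perm s.Cos)) ⟨X, hX⟩
  rw [pow_card_eq_one'] at this
  exact this.symm

end USys

namespace USys
variable {d : ℕ} (s : USys d)

lemma uE_integrable (χ : UCh d) (μ : Measure (UTor d)) [IsFiniteMeasure μ] :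
    Integrable (fun x => uE χ x) μ :=
  (uE χ).continuous.integrable_of_hasCompactSupport (HasCompactSupport.of_compactSpace _)

lemma setInt_comp (g : ℤ × ℤ) (E : Set (UTor d)) (hE : MeasurableSet E)
    (hg : (s.a g) ⁻¹' E =ᵐ[s.ν] E) (χ : UCh d) :
    ∫ x in E, uE (s.A g χ) x ∂s.ν = ∫ x in E, uE χ x ∂s.ν := by
  have h1 : ∫ x in E, uE χ x ∂(s.ν.map (s.a g)) = ∫ x in (s.a g) ⁻¹' E, uE χ (s.a g x) ∂s.ν :=
    setIntegral_map hE (uE χ).continuous.aestronglyMeasurable (s.inv g).measurable.aemeasurable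
  rw [(s.inv g).map_eq] at h1
  rw [h1, setIntegral_congr_set hg]
  rfl

lemma int_comp (g : ℤ × ℤ) (χ : UCh d) :
    ∫ x, uE (s.A g χ) x ∂s.ν = ∫ x, uE χ x ∂s.ν := by
  have := s.setInt_comp g Set.univ MeasurableSet.univ (by simp) χ
  simpa using this

lemma vdc (g : ℤ × ℤ) (χ : UCh d)
    (hψ : ∀ n : ℕ, 0 < n → ∫ x, uE ((s.A g ^ n) χ - χ) x ∂s.ν = 0)
    (E : Set (UTor d)) (hE : MeasurableSet E) (hg : (s.a g) ⁻¹' E =ᵐ[s.ν] E) :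
    ∫ x in E, uE χ x ∂s.ν = 0 := by
  let f : ℕ → Lp ℂ 2 s.ν := fun n => ContinuousMap.toLp 2 s.ν ℂ (uE ((s.A g ^ n) χ))
  have hinner : ∀ n m, inner ℂ (f m) (f n) = ∫ x, uE ((s.A g ^ n) χ - (s.A g ^ m) χ) x ∂s.ν := by
    intro n m
    rw [ContinuousMap.inner_toLp]
    simp only [uE_sub]
    rfl
  have hlt : ∀ n m, m < n → inner ℂ (f m) (f n) = 0 := by
    intro n m h
    obtain ⟨k, rfl⟩ := Nat.exists_eq_add_of_lt h
    rw [hinner]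
    have : (s.A g ^ (m + k + 1)) χ - (s.A g ^ m) χ
        = s.A (m • g) ((s.A g ^ (k + 1)) χ - χ) := by
      rw [A_nsmul, map_sub, add_assoc, pow_add]; rfl
    rw [this, int_comp]
    exact hψ _ (Nat.succ_pos k)
  have hortho : Orthonormal ℂ f := by
    rw [orthonormal_iff_ite]
    intro i j
    split_ifs with h
    · subst h
      rw [hinner, sub_self]
      have : ∀ x : UTor d, uE (0 : UCh d) x = 1 := fun x => by simp [uE_apply]
      simp [this]
    · rcases lt_or_gt_of_ne h with h | h
      · exact hlt _ _ h
      · rw [← inner_conj_symm, hlt _ _ h, map_zero]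
  have hI : ∀ n : ℕ, ∫ x in E, uE ((s.A g ^ n) χ) x ∂s.ν = ∫ x in E, uE χ x ∂s.ν := by
    intro n
    induction n with
    | zero => rfl
    | succ n ih =>
      rw [← ih, pow_succ']
      exact s.setInt_comp g E hE hg _
  let v : Lp ℂ 2 s.ν := indicatorConstLp 2 hE (measure_ne_top _ _) 1
  have hv : ∀ n, ‖inner ℂ (f n) v‖ = ‖∫ x in E, uE χ x ∂s.ν‖ := by
    intro n
    rw [norm_inner_symm, L2.inner_indicatorConstLp_one, ← hI n]
    congr 1
    refine integral_congr_ae (ae_restrict_of_ae ?_)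
    exact ContinuousMap.coeFn_toLp s.ν _
  have hB : ∀ K : ℕ, K * ‖∫ x in E, uE χ x ∂s.ν‖ ^ 2 ≤ ‖v‖ ^ 2 := by
    intro K
    have := hortho.sum_inner_products_le v (s := Finset.range K)
    simpa [hv] using this
  by_contra hne
  have hpos : 0 < ‖∫ x in E, uE χ x ∂s.ν‖ ^ 2 := by positivity
  obtain ⟨K, hK⟩ := exists_nat_gt (‖v‖ ^ 2 / ‖∫ x in E, uE χ x ∂s.ν‖ ^ 2)
  rw [div_lt_iff₀ hpos] at hK
  exact absurd (hB K) (not_le.2 hK)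

lemma exists_rem (N : ℕ) (hN : 0 < N) (g : ℤ × ℤ) :
    ∃ r ∈ Finset.range N ×ˢ Finset.range N, ∃ h : ℤ × ℤ,
      g = N • h + ((r.1 : ℤ), (r.2 : ℤ)) := by
  have hN' : (0 : ℤ) < N := by exact_mod_cast hN
  have h1 := Int.emod_nonneg g.1 hN'.ne'
  have h2 := Int.emod_nonneg g.2 hN'.ne'
  have h3 := Int.emod_lt_of_pos g.1 hN'
  have h4 := Int.emod_lt_of_pos g.2 hN'
  refine ⟨((g.1 % N).toNat, (g.2 % N).toNat), ?_, (g.1 / N, g.2 / N), ?_⟩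
  · simp only [Finset.mem_product, Finset.mem_range]
    omega
  · ext
    · simp only [Prod.fst_add, Int.toNat_of_nonneg h1, nsmul_eq_mul]
      exact (Int.mul_ediv_add_emod _ _).symm
    · simp only [Prod.snd_add, Int.toNat_of_nonneg h2, nsmul_eq_mul]
      exact (Int.mul_ediv_add_emod _ _).symm

/-- a set of positive measure invariant under `N ℤ²` sweeps out the space. -/
lemma sweep (N : ℕ) (hN : 0 < N) (E : Set (UTor d)) (hE : MeasurableSet E)
    (hinv : ∀ g, (s.a (N • g)) ⁻¹' E = E) (hpos : s.ν E ≠ 0) :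
    s.ν (⋃ r ∈ Finset.range N ×ˢ Finset.range N, (s.a ((r.1 : ℤ), (r.2 : ℤ))) ⁻¹' E) = 1 := by
  have hU : (⋃ r ∈ Finset.range N ×ˢ Finset.range N, (s.a ((r.1 : ℤ), (r.2 : ℤ))) ⁻¹' E)
      = ⋃ g, (s.a g) ⁻¹' E := by
    apply Set.Subset.antisymm
    · exact Set.iUnion₂_subset fun r _ => Set.subset_iUnion (fun g => (s.a g) ⁻¹' E) _
    · refine Set.iUnion_subset fun g x hx => ?_
      obtain ⟨r, hr, h, rfl⟩ := exists_rem N hN g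
      refine Set.mem_iUnion₂.2 ⟨r, hr, ?_⟩
      rw [Set.mem_preimage, s.a_add] at hx
      rw [← hinv h]
      exact hx
  rw [hU]
  have hm : MeasurableSet (⋃ g, (s.a g) ⁻¹' E) :=
    MeasurableSet.iUnion fun g => (s.inv g).measurable hE
  refine (s.erg _ hm fun g => ?_).resolve_left ?_
  · suffices h : (s.a g) ⁻¹' (⋃ g, (s.a g) ⁻¹' E) = ⋃ g, (s.a g) ⁻¹' E by
      rw [h]; exact Filter.EventuallyEq.refl _ _
    ext x
    simp only [Set.mem_preimage, Set.mem_iUnion]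
    constructor
    · rintro ⟨h, hh⟩
      exact ⟨h + g, by rwa [s.a_add]⟩
    · rintro ⟨h, hh⟩
      exact ⟨h - g, by rwa [← s.a_add, sub_add_cancel]⟩
  · intro h0
    refine hpos (measure_mono_null ?_ h0)
    intro x hx
    exact Set.mem_iUnion.2 ⟨0, by rwa [Set.mem_preimage, s.a_zero]⟩

lemma mem_D_of_inv (N : ℕ) (hN : 0 < N) (hNX : ∀ g : ℤ × ℤ, ∀ X ∈ s.Cos, (s.a (N • g)) ⁻¹' X = X)
    (X : Set (UTor d)) (hX : X ∈ s.Cos) (χ : UCh d) (hχ : ∀ g, s.A g χ - χ ∈ s.D)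
    (hinv : ∀ g, ∀ x ∈ X, χ (s.a (N • g) x) = χ x) : χ ∈ s.D := by
  have hXm := s.Cos_meas hX
  have hχm : Measurable χ := χ.continuous_toFun.measurable
  have hE : ∀ B : Set (AddCircle (1 : ℝ)), ∀ g,
      (s.a (N • g)) ⁻¹' (χ ⁻¹' B ∩ X) = χ ⁻¹' B ∩ X := by
    intro B g
    rw [Set.preimage_inter, hNX g X hX]
    ext x
    constructor
    · rintro ⟨h1, h2⟩
      refine ⟨?_, h2⟩
      have h1' : χ (s.a (N • g) x) ∈ B := h1
      rwa [hinv g x h2] at h1'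
    · rintro ⟨h1, h2⟩
      refine ⟨?_, h2⟩
      change χ (s.a (N • g) x) ∈ B
      rwa [hinv g x h2]
  let R := Finset.range N ×ˢ Finset.range N
  have hbig : ∀ B : Set (AddCircle (1 : ℝ)), MeasurableSet B → s.ν (χ ⁻¹' B ∩ X) ≠ 0 →
      1 ≤ (R.card : ENNReal) * s.ν (χ ⁻¹' B ∩ X) := by
    intro B hB h0
    have hm := (hχm hB).inter hXm
    rw [← s.sweep N hN _ hm (hE B) h0]
    refine (measure_biUnion_finset_le _ _).trans (le_of_eq ?_)
    rw [Finset.sum_congr rfl fun r _ => (s.inv _).measure_preimage hm.nullMeasurableSet,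
      Finset.sum_const, nsmul_eq_mul]
  let μ : Measure (AddCircle (1 : ℝ)) := (s.ν.restrict X).map χ
  have hμ : ∀ B, MeasurableSet B → μ B = s.ν (χ ⁻¹' B ∩ X) := fun B hB => by
    rw [Measure.map_apply hχm hB, Measure.restrict_apply (hχm hB)]
  have hμ0 : μ Set.univ ≠ 0 := by
    rw [hμ _ MeasurableSet.univ]
    simpa using hX.2.ne'
  obtain ⟨t, -, ht⟩ := exists_mem_forall_mem_nhdsWithin_pos_measure hμ0
  have htm : μ {t} ≠ 0 := by
    have hlim : Filter.Tendsto (fun n : ℕ => μ (Metric.closedBall t (1 / ((n : ℝ) + 1))))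
        Filter.atTop (nhds (μ (⋂ n : ℕ, Metric.closedBall t (1 / ((n : ℝ) + 1))))) := by
      refine tendsto_measure_iInter_atTop
        (fun n => Metric.isClosed_closedBall.measurableSet.nullMeasurableSet) ?_ ?_
      · intro n m h
        exact Metric.closedBall_subset_closedBall (Nat.one_div_le_one_div h)
      · exact ⟨0, measure_ne_top _ _⟩
    have hint : (⋂ n : ℕ, Metric.closedBall t (1 / ((n : ℝ) + 1))) = {t} := by
      ext y
      simp only [Set.mem_iInter, Metric.mem_closedBall, Set.mem_singleton_iff]
      constructor
      · intro h
        rw [← dist_le_zero]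
        exact ge_of_tendsto' tendsto_one_div_add_atTop_nhds_zero_nat h
      · rintro rfl n
        rw [dist_self]; positivity
    rw [hint] at hlim
    have hge : ∀ n : ℕ, (R.card : ENNReal)⁻¹ ≤ μ (Metric.closedBall t (1 / ((n : ℝ) + 1))) := by
      intro n
      have hm : MeasurableSet (Metric.closedBall t (1 / ((n : ℝ) + 1))) :=
        Metric.isClosed_closedBall.measurableSet
      have h1 := ht (Metric.closedBall t (1 / ((n : ℝ) + 1))) (by
        rw [nhdsWithin_univ]
        exact Metric.closedBall_mem_nhds _ (by positivity))
      rw [hμ _ hm] at h1 ⊢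
      have := hbig _ hm h1.ne'
      exact ENNReal.inv_le_iff_le_mul (by simp) (by simp) |>.2 this
    have := ge_of_tendsto' hlim hge
    intro h
    rw [h] at this
    simp at this
  rw [hμ _ (measurableSet_singleton t)] at htm
  have hm := (hχm (measurableSet_singleton t)).inter hXm
  have hsw := s.sweep N hN _ hm (hE {t}) htm
  choose F hFf hF using hχ
  refine ⟨⋃ r ∈ R, (fun y => t - y) '' F ((r.1 : ℤ), (r.2 : ℤ)),
    R.finite_toSet.biUnion fun r _ => (hFf _).image _, ?_⟩
  have hF' : ∀ᵐ x ∂s.ν, ∀ g, (s.A g χ - χ) x ∈ F g := ae_all_iff.2 hF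
  have hsw' := (mem_ae_iff_prob_eq_one (μ := s.ν) (Finset.measurableSet_biUnion _
    fun r _ => (s.inv ((r.1 : ℤ), (r.2 : ℤ))).measurable hm)).2 hsw
  filter_upwards [hF', hsw'] with x hx1 hx2
  obtain ⟨r, hr, hx⟩ := Set.mem_iUnion₂.1 hx2
  refine Set.mem_iUnion₂.2 ⟨r, hr, _, hx1 _, ?_⟩
  have h1 : χ (s.a ((r.1 : ℤ), (r.2 : ℤ)) x) = t := hx.1
  change t - (χ (s.a ((r.1 : ℤ), (r.2 : ℤ)) x) - χ x) = χ x
  rw [h1]; abel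

lemma case_two (N : ℕ) (hN : 0 < N) (hNX : ∀ g : ℤ × ℤ, ∀ X ∈ s.Cos, (s.a (N • g)) ⁻¹' X = X)
    (χ : UCh d) (hχ : ∀ g, s.A g χ - χ ∈ s.D) (hχD : χ ∉ s.D)
    (E : Set (UTor d)) (hE : MeasurableSet E) (hg : ∀ g, (s.a (N • g)) ⁻¹' E =ᵐ[s.ν] E) :
    ∫ x in E, uE χ x ∂s.ν = 0 := by
  have hpiece : ∀ X ∈ s.Cos, ∫ x in E ∩ X, uE χ x ∂s.ν = 0 := by
    intro X hX
    have : ∃ g, ∃ x ∈ X, χ (s.a (N • g) x) ≠ χ x := by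
      by_contra! h
      exact hχD (s.mem_D_of_inv N hN hNX X hX χ hχ h)
    obtain ⟨g, x₀, hx₀, hne⟩ := this
    have hXm := s.Cos_meas hX
    have h1 := s.setInt_comp (N • g) (E ∩ X) (hE.inter hXm) (by
      rw [Set.preimage_inter, hNX g X hX]
      exact (hg g).inter (Filter.EventuallyEq.refl _ _)) χ
    have h2 : ∫ x in E ∩ X, uE (s.A (N • g) χ) x ∂s.ν
        = ∫ x in E ∩ X, uE (s.A (N • g) χ - χ) x₀ * uE χ x ∂s.ν := by
      refine setIntegral_congr_fun (hE.inter hXm) fun x hx => ?_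
      have e : uE (s.A (N • g) χ - χ) x₀ = uE (s.A (N • g) χ - χ) x := by
        rw [uE_apply, uE_apply, s.Cos_const hX (hχ (N • g)) hx₀ hx.2]
      change uE (s.A (N • g) χ) x = _
      rw [e, ← uE_add, sub_add_cancel]
    rw [h2, integral_const_mul] at h1
    by_contra h0
    have h3 : uE (s.A (N • g) χ - χ) x₀ = 1 := mul_right_cancel₀ h0 (by rw [h1, one_mul])
    have h4 : (s.A (N • g) χ - χ) x₀ = 0 := toCircle_eq_one h3
    exact hne (sub_eq_zero.1 h4)
  obtain ⟨hfin, hcon⟩ := s.Cos_fin_conull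
  have hEeq : E =ᵐ[s.ν] ⋃ X ∈ hfin.toFinset, E ∩ X := by
    filter_upwards [hcon] with x hx
    obtain ⟨X, hX, hxX⟩ := hx
    apply propext
    change x ∈ E ↔ x ∈ ⋃ X ∈ hfin.toFinset, E ∩ X
    simp only [Set.mem_iUnion, Set.Finite.mem_toFinset, Set.mem_inter_iff]
    exact ⟨fun h => ⟨X, hX, h, hxX⟩, fun ⟨_, _, h, _⟩ => h⟩
  rw [setIntegral_congr_set hEeq, integral_biUnion_finset]
  · exact Finset.sum_eq_zero fun X hX => hpiece X (hfin.mem_toFinset.1 hX)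
  · intro X hX
    exact hE.inter (s.Cos_meas (hfin.mem_toFinset.1 hX))
  · intro X hX Y hY hXY
    refine Set.disjoint_left.2 fun x hx hy => hXY ?_
    exact s.Cos_disj (hfin.mem_toFinset.1 hX) (hfin.mem_toFinset.1 hY) hx.2 hy.2
  · intro X _
    exact (uE_integrable χ s.ν).integrableOn

lemma fix_all (χ : UCh d) (h1 : s.A (1, 0) χ - χ ∈ s.D) (h2 : s.A (0, 1) χ - χ ∈ s.D)
    (g : ℤ × ℤ) : s.A g χ - χ ∈ s.D := by
  let H : AddSubgroup (ℤ × ℤ) :=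
    { carrier := {g | s.A g χ - χ ∈ s.D}
      zero_mem' := by
        change s.A 0 χ - χ ∈ s.D
        rw [A_zero]; simp
      add_mem' := by
        intro g h hg hh
        change s.A (g + h) χ - χ ∈ s.D
        have : s.A (g + h) χ - χ = s.A g (s.A h χ - χ) + (s.A g χ - χ) := by
          rw [A_add, map_sub, Module.End.mul_apply]; abel
        rw [this]
        exact s.D.add_mem (s.D_inv g hh) hg
      neg_mem' := by
        intro g hg
        change s.A (-g) χ - χ ∈ s.D
        have : s.A (-g) χ - χ = - s.A (-g) (s.A g χ - χ) := by
          rw [map_sub, ← Module.End.mul_apply, ← A_add, neg_add_cancel, A_zero,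
            Module.End.one_apply]; abel
        rw [this]
        exact s.D.neg_mem (s.D_inv (-g) hg) }
  have e : g = g.1 • ((1, 0) : ℤ × ℤ) + g.2 • ((0, 1) : ℤ × ℤ) := by
    ext <;> simp
  have : g ∈ H := by
    rw [e]
    exact H.add_mem (H.zsmul_mem h1 _) (H.zsmul_mem h2 _)
  exact this

lemma main_zero (N : ℕ) (hN : 0 < N)
    (hNX : ∀ g : ℤ × ℤ, ∀ X ∈ s.Cos, (s.a (N • g)) ⁻¹' X = X) (t : ℕ) :
    ∀ (χ : UCh d) (k₁ k₂ : ℕ), k₁ + k₂ = t → ((s.A (1, 0) - 1) ^ k₁) χ = 0 →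
      ((s.A (0, 1) - 1) ^ k₂) χ = 0 → χ ∉ s.D →
    ∀ (E : Set (UTor d)), MeasurableSet E → (∀ g, (s.a (N • g)) ⁻¹' E =ᵐ[s.ν] E) →
    ∫ x in E, uE χ x ∂s.ν = 0 := by
  have hlow : ∀ (e : ℤ × ℤ) (k m : ℕ) (χ : UCh d), ((s.A e - 1) ^ (k + 1)) χ = 0 →
      ((s.A e - 1) ^ k) ((s.A e ^ m) χ - χ) = 0 := by
    intro e k m χ h
    have h1 : (s.A e ^ m) χ - χ = ((∑ i ∈ Finset.range m, s.A e ^ i) * (s.A e - 1)) χ := by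
      rw [geom_sum_mul]; rfl
    have hc : Commute ((s.A e - 1) ^ k) (∑ i ∈ Finset.range m, s.A e ^ i) := by
      refine Commute.sum_right _ _ _ fun i _ => ?_
      exact ((Commute.refl (s.A e)).sub_left (Commute.one_left _)).pow_pow _ _
    rw [h1, ← Module.End.mul_apply, ← mul_assoc, hc.eq, mul_assoc, ← pow_succ,
      Module.End.mul_apply, h, map_zero]
  have hoth : ∀ (e e' : ℤ × ℤ) (k m : ℕ) (χ : UCh d), ((s.A e' - 1) ^ k) χ = 0 →
      ((s.A e' - 1) ^ k) ((s.A e ^ m) χ - χ) = 0 := by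
    intro e e' k m χ h
    have hc : Commute ((s.A e' - 1) ^ k) (s.A e ^ m) :=
      ((s.A_comm e' e).sub_left (Commute.one_left _)).pow_pow _ _
    rw [map_sub, h, sub_zero, ← Module.End.mul_apply, hc.eq, Module.End.mul_apply, h, map_zero]
  induction t with
  | zero =>
    intro χ k₁ k₂ hk h1 _ hχ
    obtain rfl : k₁ = 0 := by omega
    have : χ = 0 := h1
    exact absurd (this ▸ s.D.zero_mem) hχ
  | succ t ih =>
    intro χ k₁ k₂ hk h1 h2 hχ E hE hg
    have hpow : ∀ (e : ℤ × ℤ) (n : ℕ), s.A (N • e) ^ n = s.A e ^ (N * n) := fun e n => by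
      rw [A_nsmul, pow_mul]
    have huniv : ∀ g, (s.a (N • g)) ⁻¹' (Set.univ : Set (UTor d)) =ᵐ[s.ν] Set.univ :=
      fun g => by simp
    by_cases c1 : s.A (1, 0) χ - χ ∈ s.D
    · by_cases c2 : s.A (0, 1) χ - χ ∈ s.D
      · exact s.case_two N hN hNX χ (s.fix_all χ c1 c2) hχ E hE hg
      · rcases k₂ with _ | k
        · have : χ = 0 := h2
          exact absurd (this ▸ s.D.zero_mem) hχ
        refine s.vdc (N • (0, 1)) χ (fun n hn => ?_) E hE (hg _)
        rw [hpow]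
        have := ih ((s.A (0, 1) ^ (N * n)) χ - χ) k₁ k (by omega) (hoth _ _ _ _ _ h1)
          (hlow _ _ _ _ h2) (fun h => c2 (s.no_tors _ _ (Nat.mul_pos hN hn) _ h))
          Set.univ MeasurableSet.univ huniv
        simpa using this
    · rcases k₁ with _ | k
      · have : χ = 0 := h1
        exact absurd (this ▸ s.D.zero_mem) hχ
      refine s.vdc (N • (1, 0)) χ (fun n hn => ?_) E hE (hg _)
      rw [hpow]
      have := ih ((s.A (1, 0) ^ (N * n)) χ - χ) k k₂ (by omega) (hlow _ _ _ _ h1)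
        (hoth _ _ _ _ _ h2) (fun h => c1 (s.no_tors _ _ (Nat.mul_pos hN hn) _ h))
        Set.univ MeasurableSet.univ huniv
      simpa using this

lemma zero_of_notMem (N : ℕ) (hN : 0 < N)
    (hNX : ∀ g : ℤ × ℤ, ∀ X ∈ s.Cos, (s.a (N • g)) ⁻¹' X = X) (χ : UCh d) (hχ : χ ∉ s.D)
    (E : Set (UTor d)) (hE : MeasurableSet E) (hg : ∀ g, (s.a (N • g)) ⁻¹' E =ᵐ[s.ν] E) :
    ∫ x in E, uE χ x ∂s.ν = 0 := by
  obtain ⟨k₁, h1⟩ := s.uni' (1, 0)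
  obtain ⟨k₂, h2⟩ := s.uni' (0, 1)
  exact s.main_zero N hN hNX _ χ k₁ k₂ rfl (by rw [h1]; rfl) (by rw [h2]; rfl) hχ E hE hg

end USys

namespace USys
variable {d : ℕ} (s : USys d)

lemma final : ∃ Λ : AddSubgroup (ℤ × ℤ), Λ.FiniteIndex ∧
      ∃ (n : ℕ) (Xs : Fin n → Set (UTor d)),
        IsErgodicComponents s.ν (fun g => ⇑(s.a g)) Λ Xs ∧
        ∀ i, ∃ (x : UTor d)
            (S : AddSubgroup (UTor d)),
          IsClosed (S : Set (UTor d)) ∧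
          IsConnected (S : Set (UTor d)) ∧
          (((s.ν (Xs i))⁻¹ • s.ν.restrict (Xs i))
              ((fun y => x + y) '' (S : Set (UTor d))) = 1) ∧
          ∀ t ∈ S, Measure.map (fun y => t + y) ((s.ν (Xs i))⁻¹ • s.ν.restrict (Xs i))
            = (s.ν (Xs i))⁻¹ • s.ν.restrict (Xs i) := by
  obtain ⟨N, hN, hNX⟩ := s.exists_N
  obtain ⟨hfin, hcon⟩ := s.Cos_fin_conull
  have : NeZero N := ⟨hN.ne'⟩
  let f : ℤ × ℤ →+ ZMod N × ZMod N :=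
    AddMonoidHom.prodMap (Int.castAddHom (ZMod N)) (Int.castAddHom (ZMod N))
  have hker : ∀ g ∈ f.ker, ∃ h, g = N • h := by
    intro g hg
    have hg' : f g = 0 := hg
    have h1 : ((g.1 : ℤ) : ZMod N) = 0 := congrArg Prod.fst hg'
    have h2 : ((g.2 : ℤ) : ZMod N) = 0 := congrArg Prod.snd hg'
    rw [ZMod.intCast_zmod_eq_zero_iff_dvd] at h1 h2
    obtain ⟨a, ha⟩ := h1
    obtain ⟨b, hb⟩ := h2
    refine ⟨(a, b), ?_⟩
    ext
    · simpa using ha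
    · simpa using hb
  have hker' : ∀ h : ℤ × ℤ, N • h ∈ f.ker := by
    intro h
    change f (N • h) = 0
    rw [map_nsmul]
    ext <;> simp
  have hz := s.zero_of_notMem N hN hNX
  have : Finite s.Cos := hfin
  let e := (Finite.equivFin s.Cos).symm
  have hXs : ∀ i, (e i).1 ∈ s.Cos := fun i => (e i).2
  refine ⟨f.ker, inferInstance, Nat.card s.Cos, fun i => (e i).1,
    ⟨fun i => s.Cos_meas (hXs i), fun i => (hXs i).2, ?_, ?_, ?_, ?_⟩, ?_⟩
  · intro i j hij
    have : (e i).1 ∩ (e j).1 = ∅ := by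
      refine Set.eq_empty_iff_forall_notMem.2 fun x hx => hij (e.injective (Subtype.ext ?_))
      exact s.Cos_disj (hXs i) (hXs j) hx.1 hx.2
    rw [this, measure_empty]
  · refine measure_mono_null ?_ hcon
    intro x hx hx'
    obtain ⟨X, hX, hxX⟩ := hx'
    refine hx.2 (Set.mem_iUnion.2 ⟨e.symm ⟨X, hX⟩, ?_⟩)
    rwa [Equiv.apply_symm_apply]
  · intro i g hg
    obtain ⟨h, rfl⟩ := hker g hg
    change (s.a (N • h)) ⁻¹' (e i).1 =ᵐ[s.ν] (e i).1
    rw [hNX h _ (hXs i)]; exact Filter.EventuallyEq.refl _ _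
  · intro i B hB hBinv
    have hXi := hXs i
    change s.ν ((e i).1 ∩ B) = 0 ∨ s.ν ((e i).1 \ B) = 0
    generalize (e i).1 = X at hXi
    have hXm := s.Cos_meas hXi
    have hEm := hXm.inter hB
    have heq : s.ν X • s.ν.restrict (X ∩ B) = s.ν (X ∩ B) • s.ν.restrict X := by
      have i1 : IsFiniteMeasure (s.ν X • s.ν.restrict (X ∩ B)) :=
        Measure.smul_finite _ (measure_ne_top _ _)
      have i2 : IsFiniteMeasure (s.ν (X ∩ B) • s.ν.restrict X) :=
        Measure.smul_finite _ (measure_ne_top _ _)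
      refine u_measure_ext fun χ => ?_
      rw [integral_smul_measure, integral_smul_measure]
      by_cases hχ : χ ∈ s.D
      · obtain ⟨x₀, hx₀⟩ : X.Nonempty := nonempty_of_measure_ne_zero hXi.2.ne'
        have hc : ∀ x ∈ X, uE χ x = uE χ x₀ := fun x hx => by
          rw [uE_apply, uE_apply, s.Cos_const hXi hχ hx hx₀]
        rw [setIntegral_congr_fun hEm (fun x hx => hc x hx.1),
          setIntegral_congr_fun hXm (fun x hx => hc x hx), setIntegral_const, setIntegral_const,
          smul_smul, smul_smul, Measure.real, Measure.real, mul_comm]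
      · rw [hz χ hχ _ hEm, hz χ hχ _ hXm, smul_zero, smul_zero]
        · intro g; rw [hNX g X hXi]; exact Filter.EventuallyEq.refl _ _
        · intro g
          rw [Set.preimage_inter, hNX g X hXi]
          exact (Filter.EventuallyEq.refl _ _).inter (hBinv _ (hker' g))
    have h1 := congrArg (fun μ => μ (X \ B)) heq
    simp only [Measure.smul_apply, smul_eq_mul] at h1
    rw [Measure.restrict_apply (hXm.diff hB), Measure.restrict_apply (hXm.diff hB)] at h1
    have e1 : X \ B ∩ (X ∩ B) = ∅ := by
      ext x; simp; tauto
    have e2 : X \ B ∩ X = X \ B := Set.inter_eq_left.2 Set.sdiff_subset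
    rw [e1, e2, measure_empty, mul_zero] at h1
    exact mul_eq_zero.1 h1.symm
  · intro i
    have hXi := hXs i
    change ∃ (x : UTor d)
            (S : AddSubgroup (UTor d)),
          IsClosed (S : Set (UTor d)) ∧
          IsConnected (S : Set (UTor d)) ∧
          (((s.ν (e i).1)⁻¹ • s.ν.restrict (e i).1)
              ((fun y => x + y) '' (S : Set (UTor d))) = 1) ∧
          ∀ t ∈ S, Measure.map (fun y => t + y) ((s.ν (e i).1)⁻¹ • s.ν.restrict (e i).1)
            = (s.ν (e i).1)⁻¹ • s.ν.restrict (e i).1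
    generalize (e i).1 = X at hXi
    have hXm := s.Cos_meas hXi
    obtain ⟨⟨b, hb⟩, hpos⟩ := id hXi
    refine ⟨b, s.S, s.S_closed, s.S_conn, ?_, ?_⟩
    · rw [← s.cos_eq, ← hb, Measure.smul_apply, Measure.restrict_apply_self, smul_eq_mul]
      exact ENNReal.inv_mul_cancel hpos.ne' (measure_ne_top _ _)
    · intro t ht
      rw [Measure.map_smul]
      congr 1
      have hmeas : Measurable (fun y : UTor d => t + y) := (continuous_const_add t).measurable
      refine u_measure_ext fun χ => ?_
      rw [integral_map hmeas.aemeasurable (uE χ).continuous.aestronglyMeasurable]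
      by_cases hχ : χ ∈ s.D
      · have : ∀ y, uE χ (t + y) = uE χ y := fun y => by
          rw [uE_apply, uE_apply, map_add, ht χ hχ, zero_add]
        simp only [this]
      · simp only [uE_map_add]
        rw [integral_const_mul, hz χ hχ _ hXm, mul_zero]
        intro g; rw [hNX g X hXi]; exact Filter.EventuallyEq.refl _ _

end USys

/-- **Proposition 4.1.** Let `α` be a unipotent action of `ℤ²` by continuous
automorphisms on a finite-dimensional torus `T = (ℝ/ℤ)^d`, and let `ν` be an ergodic
`α`-invariant Borel probability measure. Then there is a finite index subgroup
`Λ ⊆ ℤ²` such that each `Λ`-ergodic component of `ν` is the (normalized) Haar measure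
on a translate `x + S` of a subtorus `S` (a closed connected subgroup); here the Haar
measure on `x + S` is characterized as the probability measure giving full mass to
`x + S` and invariant under translation by every element of `S`. -/
theorem ergodic_components_of_unipotent_toral_action
    (d : ℕ)
    (α : ℤ × ℤ → ((Fin d → AddCircle (1 : ℝ)) ≃+ (Fin d → AddCircle (1 : ℝ))))
    (hα0 : α 0 = AddEquiv.refl _)
    (hαadd : ∀ g h : ℤ × ℤ, α (g + h) = (α h).trans (α g))
    (hcont : ∀ g, Continuous (α g))
    (huni : ∀ g : ℤ × ℤ, ∃ k : ℕ, 1 ≤ k ∧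
      ((show AddMonoid.End (Fin d → AddCircle (1 : ℝ)) from (α g).toAddMonoidHom)
        - 1) ^ k = 0)
    (ν : Measure (Fin d → AddCircle (1 : ℝ))) [IsProbabilityMeasure ν]
    (hinv : ∀ g, MeasurePreserving (α g) ν ν)
    (herg : ∀ S : Set (Fin d → AddCircle (1 : ℝ)), MeasurableSet S →
      (∀ g : ℤ × ℤ, (α g) ⁻¹' S =ᵐ[ν] S) → ν S = 0 ∨ ν S = 1) :
    ∃ Λ : AddSubgroup (ℤ × ℤ), Λ.FiniteIndex ∧
      ∃ (n : ℕ) (Xs : Fin n → Set (Fin d → AddCircle (1 : ℝ))),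
        IsErgodicComponents ν (fun g => ⇑(α g)) Λ Xs ∧
        ∀ i, ∃ (x : Fin d → AddCircle (1 : ℝ))
            (S : AddSubgroup (Fin d → AddCircle (1 : ℝ))),
          IsClosed (S : Set (Fin d → AddCircle (1 : ℝ))) ∧
          IsConnected (S : Set (Fin d → AddCircle (1 : ℝ))) ∧
          (((ν (Xs i))⁻¹ • ν.restrict (Xs i))
              ((fun y => x + y) '' (S : Set (Fin d → AddCircle (1 : ℝ)))) = 1) ∧
          ∀ s ∈ S, Measure.map (fun y => s + y) ((ν (Xs i))⁻¹ • ν.restrict (Xs i))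
            = (ν (Xs i))⁻¹ • ν.restrict (Xs i) := by
  let s : USys d :=
    { a := fun g => ⟨(α g).toAddMonoidHom, hcont g⟩
      a_zero := fun x => by
        change α 0 x = x
        rw [hα0]; rfl
      a_add := fun g h x => by
        change α (g + h) x = α g (α h x)
        rw [hαadd]; rfl
      ν := ν
      prob := inferInstance
      inv := hinv
      erg := herg
      uni := fun g => by
        obtain ⟨k, -, hk⟩ := huni g
        refine ⟨k, fun x => ?_⟩
        have h2 := DFunLike.congr_fun hk x
        rw [AddMonoid.End.coe_pow] at h2
        exact h2 }
  exact s.final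
end

section
/- Let (X, μ) be a probability space equipped with an ergodic measure-preserving action of ℤ². If E ⊆ X is periodic and B ⊆ E is weakly periodic, then E ∖ B is weakly periodic. -/
open MeasureTheory

/-- A measurable set `E` is 1-periodic if `gE = E` up to `μ`-null sets for some
nonzero `g ∈ ℤ²`. -/
def IsOnePeriodic {X : Type*} [MeasurableSpace X] (μ : Measure X)
    (T : ℤ × ℤ → X → X) (E : Set X) : Prop :=
  ∃ g : ℤ × ℤ, g ≠ 0 ∧ T g '' E =ᵐ[μ] E

/-- A measurable set `E` is periodic if `gE = E` (up to `μ`-null sets) for every `g`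
in some finite index subgroup `Λ ⊆ ℤ²` (equivalently, `{g : gE = E}` is a finite
index subgroup of `ℤ²`). -/
def IsPeriodic {X : Type*} [MeasurableSpace X] (μ : Measure X)
    (T : ℤ × ℤ → X → X) (E : Set X) : Prop :=
  ∃ Λ : AddSubgroup (ℤ × ℤ), Λ.FiniteIndex ∧ ∀ g ∈ Λ, T g '' E =ᵐ[μ] E

/-- A set is weakly periodic if it is a finite disjoint union of measurable
1-periodic sets. -/
def IsWeaklyPeriodic {X : Type*} [MeasurableSpace X] (μ : Measure X)
    (T : ℤ × ℤ → X → X) (E : Set X) : Prop :=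
  ∃ (n : ℕ) (B : Fin n → Set X),
    (∀ i, MeasurableSet (B i)) ∧
    (∀ i j, i ≠ j → Disjoint (B i) (B j)) ∧
    (⋃ i, B i) = E ∧
    ∀ i, IsOnePeriodic μ T (B i)

theorem aux_int (a b c d : ℤ) (hg : ((a, b) : ℤ × ℤ) ≠ 0) (hg' : ((c, d) : ℤ × ℤ) ≠ 0)
    (H K : AddSubgroup (ℤ × ℤ)) (h1 : (a, b) ∈ H) (h2 : (c, d) ∈ K) :
    ∃ N : ℤ, N ≠ 0 ∧ (N • ((a, b) : ℤ × ℤ) ∈ K ∨ ∀ v : ℤ × ℤ, N • v ∈ H ⊔ K) := by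
  by_cases hd : a * d - b * c = 0
  · refine ⟨c * c + d * d, ?_, Or.inl ?_⟩
    · intro h
      apply hg'
      have hc : c = 0 := by nlinarith [mul_self_nonneg c, mul_self_nonneg d]
      have hd : d = 0 := by nlinarith [mul_self_nonneg c, mul_self_nonneg d]
      simp [hc, hd]
    · have : (c * c + d * d) • ((a, b) : ℤ × ℤ) = (a * c + b * d) • ((c, d) : ℤ × ℤ) := by
        ext
        · simp; linear_combination d * hd
        · simp; linear_combination (-c) * hd
      rw [this]
      exact K.zsmul_mem h2 _
  · refine ⟨a * d - b * c, hd, Or.inr ?_⟩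
    rintro ⟨x, y⟩
    have : (a * d - b * c) • ((x, y) : ℤ × ℤ)
        = (x * d - y * c) • ((a, b) : ℤ × ℤ) + (a * y - b * x) • ((c, d) : ℤ × ℤ) := by
      ext
      · simp; ring
      · simp; ring
    rw [this]
    exact AddSubgroup.add_mem_sup (H.zsmul_mem h1 _) (K.zsmul_mem h2 _)

/-- **Lemma 5.1.** Let `(X, μ)` be a probability space with an ergodic
measure-preserving `ℤ²`-action. If `E ⊆ X` is periodic and `B ⊆ E` is weakly
periodic, then `E ∖ B` is weakly periodic. -/
theorem sdiff_weaklyPeriodic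
    {X : Type*} [MeasurableSpace X] (μ : Measure X) [IsProbabilityMeasure μ]
    (T : ℤ × ℤ → X → X)
    (hmp : ∀ g, MeasurePreserving (T g) μ μ)
    (hT0 : T 0 = id)
    (hTadd : ∀ g h : ℤ × ℤ, T (g + h) = T g ∘ T h)
    (herg : ∀ S : Set X, MeasurableSet S → (∀ g : ℤ × ℤ, T g ⁻¹' S =ᵐ[μ] S) →
      μ S = 0 ∨ μ S = 1)
    (E B : Set X) (hE : MeasurableSet E) (hBE : B ⊆ E)
    (hEper : IsPeriodic μ T E)
    (hBweak : IsWeaklyPeriodic μ T B) :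
    IsWeaklyPeriodic μ T (E \ B) := by
  classical
  have himg : ∀ g (A : Set X), T g '' A = T (-g) ⁻¹' A := by
    intro g A
    refine congrFun (Set.image_eq_preimage_of_inverse ?_ ?_) A
    · intro x
      have := congrFun (hTadd (-g) g) x
      simpa [hT0] using this.symm
    · intro x
      have := congrFun (hTadd g (-g)) x
      simpa [hT0] using this.symm
  have hadd : ∀ g h x, T (g + h) x = T g (T h x) := fun g h x => by rw [hTadd]; rfl
  have hpull : ∀ g {p : X → Prop}, (∀ᵐ x ∂μ, p x) → ∀ᵐ x ∂μ, p (T g x) := fun g p hp =>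
    (hmp g).quasiMeasurePreserving.ae hp
  have hst : ∀ A : Set X, ∃ H : AddSubgroup (ℤ × ℤ), ∀ g, g ∈ H ↔ ∀ᵐ x ∂μ, (T g x ∈ A ↔ x ∈ A) := by
    intro A
    refine ⟨{ carrier := {g | ∀ᵐ x ∂μ, (T g x ∈ A ↔ x ∈ A)}, zero_mem' := ?_, add_mem' := ?_, neg_mem' := ?_ }, fun g => Iff.rfl⟩
    · intro g h hg hh
      change ∀ᵐ x ∂μ, (T (g + h) x ∈ A ↔ x ∈ A)
      filter_upwards [hpull h hg, hh] with x h1 h2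
      rw [hadd, h1, h2]
    · simp [hT0]
    · intro g hg
      change ∀ᵐ x ∂μ, (T (-g) x ∈ A ↔ x ∈ A)
      filter_upwards [hpull (-g) hg] with x h1
      rw [← hadd] at h1
      simpa [hT0] using h1.symm
  choose st hst using hst
  have himg' : ∀ g (A : Set X), T g '' A =ᵐ[μ] A ↔ g ∈ st A := by
    intro g A
    rw [himg, ← neg_mem_iff, hst, Filter.eventuallyEq_set]
    rfl
  obtain ⟨Λ, hΛ, hΛE⟩ := hEper
  obtain ⟨n, b, hbm, hbd, hbU, hb1⟩ := hBweak
  choose g hg0 hgb using hb1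
  have hgb' : ∀ i, g i ∈ st (b i) := fun i => (himg' _ _).1 (hgb i)
  have hN := fun i j => aux_int (g i).1 (g i).2 (g j).1 (g j).2 (hg0 i) (hg0 j) _ _ (hgb' i) (hgb' j)
  choose M hM0 hM using hN
  obtain ⟨N, hN0, hNE, hNM⟩ : ∃ N : ℤ, N ≠ 0 ∧ (∀ v : ℤ × ℤ, N • v ∈ st E) ∧
      ∀ i j, N • g i ∈ st (b j) ∨ ∀ v : ℤ × ℤ, N • v ∈ st (b i) ⊔ st (b j) := by
    refine ⟨(Λ.index : ℤ) * ∏ p : Fin n × Fin n, M p.1 p.2, ?_, ?_, ?_⟩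
    · refine mul_ne_zero (by exact_mod_cast hΛ.index_ne_zero) ?_
      exact Finset.prod_ne_zero_iff.2 fun p _ => hM0 _ _
    · intro v
      rw [mul_comm, mul_smul]
      apply AddSubgroup.zsmul_mem
      rw [← himg']
      apply hΛE
      rw [natCast_zsmul]
      exact Λ.nsmul_index_mem v
    · intro i j
      obtain ⟨k, hk⟩ : M i j ∣ (Λ.index : ℤ) * ∏ p : Fin n × Fin n, M p.1 p.2 :=
        Dvd.dvd.mul_left (Finset.dvd_prod_of_mem (fun p : Fin n × Fin n => M p.1 p.2)
          (Finset.mem_univ (i, j))) _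
      rw [hk, mul_comm]
      rcases hM i j with h | h
      · left
        rw [mul_smul]
        exact AddSubgroup.zsmul_mem _ h _
      · right
        intro v
        rw [mul_smul]
        exact AddSubgroup.zsmul_mem _ (h v) _
  -- saturations
  let S : Fin n → Set X := fun i => ⋃ v : ℤ × ℤ, T (N • v) ⁻¹' b i
  have hSmem : ∀ i x, x ∈ S i ↔ ∃ v : ℤ × ℤ, T (N • v) x ∈ b i := fun i x => by simp [S]
  have hSm : ∀ i, MeasurableSet (S i) := fun i =>
    MeasurableSet.iUnion fun v => (hmp _).measurable (hbm i)
  have hbS : ∀ i x, x ∈ b i → x ∈ S i := fun i x hx => (hSmem i x).2 ⟨0, by simpa [hT0] using hx⟩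
  have hSinv : ∀ i w x, T (N • w) x ∈ S i ↔ x ∈ S i := by
    intro i w x
    rw [hSmem, hSmem]
    constructor
    · rintro ⟨v, hv⟩
      exact ⟨v + w, by rwa [smul_add, hadd]⟩
    · rintro ⟨v, hv⟩
      refine ⟨v - w, ?_⟩
      rwa [← hadd, ← smul_add, sub_add_cancel]
  have hSd : ∀ i j, i ≠ j → (∀ v : ℤ × ℤ, N • v ∈ st (b i) ⊔ st (b j)) →
      ∀ᵐ x ∂μ, ¬ (x ∈ S i ∧ x ∈ S j) := by
    intro i j hij h
    have key : ∀ v w : ℤ × ℤ, ∀ᵐ x ∂μ, ¬ (T (N • v) x ∈ b i ∧ T (N • w) x ∈ b j) := by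
      intro v w
      obtain ⟨p, hp, q, hq, hpq⟩ := AddSubgroup.mem_sup.1 (h (v - w))
      filter_upwards [hpull (q + N • w) ((hst _ _).1 hp), hpull (N • w) ((hst _ _).1 hq)] with x h1 h2
      rintro ⟨h3, h4⟩
      have e : N • v = p + (q + N • w) := by
        rw [← add_assoc, hpq, ← smul_add, sub_add_cancel]
      rw [e, hadd, h1] at h3
      rw [← h2, ← hadd] at h4
      exact Set.disjoint_left.1 (hbd i j hij) h3 h4
    filter_upwards [ae_all_iff.2 fun v => ae_all_iff.2 (key v)] with x hx
    rw [hSmem, hSmem]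
    rintro ⟨⟨v, hv⟩, w, hw⟩
    exact hx v w ⟨hv, hw⟩
  have hBmem : ∀ x, x ∈ B ↔ ∃ i, x ∈ b i := fun x => by rw [← hbU]; simp
  have hBm : MeasurableSet B := by rw [← hbU]; exact MeasurableSet.iUnion hbm
  let D : Fin n → Set X := fun i => S i \ ⋃ j : {j : Fin n // j < i}, S j
  have hDmem : ∀ i x, x ∈ D i ↔ x ∈ S i ∧ ∀ j < i, x ∉ S j := fun i x => by simp [D]
  have hDm : ∀ i, MeasurableSet (D i) := fun i =>
    (hSm i).diff (MeasurableSet.iUnion fun j => hSm j)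
  have hDinv : ∀ i w x, T (N • w) x ∈ D i ↔ x ∈ D i := by
    intro i w x
    simp only [hDmem, hSinv]
  refine ⟨n + 1, Fin.cons ((E \ B) \ ⋃ i, S i) (fun i => (E \ B) ∩ D i), ?_, ?_, ?_, ?_⟩
  · intro i
    refine Fin.cases ?_ (fun i => ?_) i
    · exact (hE.diff hBm).diff (MeasurableSet.iUnion hSm)
    · exact (hE.diff hBm).inter (hDm i)
  · have h0 : ∀ i, Disjoint ((E \ B) \ ⋃ i, S i) ((E \ B) ∩ D i) := by
      intro i
      refine Set.disjoint_left.2 fun x h1 h2 => h1.2 ?_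
      exact Set.mem_iUnion.2 ⟨i, h2.2.1⟩
    have h1 : ∀ i j, i < j → Disjoint ((E \ B) ∩ D i) ((E \ B) ∩ D j) := by
      intro i j hij
      refine Set.disjoint_left.2 fun x h1 h2 => ?_
      exact ((hDmem _ _).1 h2.2).2 i hij h1.2.1
    intro i j
    refine Fin.cases ?_ (fun i => ?_) i <;> refine Fin.cases ?_ (fun j => ?_) j
    · intro h; exact absurd rfl h
    · intro _; exact h0 j
    · intro _; exact (h0 i).symm
    · intro h
      have h : i ≠ j := fun e => h (by rw [e])
      rcases lt_or_gt_of_ne h with h | h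
      · exact h1 i j h
      · exact (h1 j i h).symm
  · ext x
    rw [Set.mem_iUnion, Fin.exists_fin_succ]
    simp only [Fin.cons_zero, Fin.cons_succ]
    constructor
    · rintro (h | ⟨i, h⟩)
      · exact h.1
      · exact h.1
    · intro h
      by_cases hx : ∃ i, x ∈ S i
      · right
        obtain ⟨i, hi, hmin⟩ := WellFounded.has_min (wellFounded_lt (α := Fin n)) {i | x ∈ S i} hx
        exact ⟨i, h, (hDmem _ _).2 ⟨hi, fun j hj hjS => hmin j hjS hj⟩⟩
      · left
        exact ⟨h, by simpa using hx⟩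
  · intro i
    refine Fin.cases ?_ (fun i => ?_) i
    · refine ⟨N • (1, 0), ?_, ?_⟩
      · intro h
        have := congrArg Prod.fst h
        simp at this
        exact hN0 this
      · rw [himg', hst]
        filter_upwards [(hst _ _).1 (hNE (1, 0))] with x hx
        simp only [Fin.cons_zero, Set.mem_diff, Set.mem_iUnion, hSinv, hx, hBmem]
        have h1 : (∃ i, T (N • (1, 0)) x ∈ b i) → ∃ i, x ∈ S i := fun ⟨i, hi⟩ =>
          ⟨i, (hSinv i _ x).1 (hbS _ _ hi)⟩
        have h2 : (∃ i, x ∈ b i) → ∃ i, x ∈ S i := fun ⟨i, hi⟩ => ⟨i, hbS _ _ hi⟩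
        tauto
    · refine ⟨N • g i, smul_ne_zero hN0 (hg0 i), ?_⟩
      rw [himg', hst]
      have key : ∀ j, ∀ᵐ x ∂μ, x ∈ S i → (T (N • g i) x ∈ b j ↔ x ∈ b j) := by
        intro j
        by_cases hpar : N • g i ∈ st (b j)
        · filter_upwards [(hst _ _).1 hpar] with x hx _ using hx
        · have hij : i ≠ j := by
            rintro rfl
            exact hpar (AddSubgroup.zsmul_mem _ (hgb' i) _)
          filter_upwards [hSd i j hij ((hNM i j).resolve_left hpar)] with x hx hxi
          constructor
          · intro h
            exact absurd ⟨hxi, (hSinv j _ x).1 (hbS _ _ h)⟩ hx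
          · intro h
            exact absurd ⟨hxi, hbS _ _ h⟩ hx
      filter_upwards [(hst _ _).1 (hNE (g i)), ae_all_iff.2 key] with x hx hk
      simp only [Fin.cons_succ, Set.mem_inter_iff, Set.mem_diff, hDinv, hx, hBmem]
      refine and_congr_left fun hD => and_congr_right fun _ => not_congr ?_
      exact exists_congr fun j => hk j hD.1
end
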